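/- Every slice of S₊³ of dimension at most 4 admits a Q²-lift; that is, for every linear subspace L of S³ such that S₊³ ∩ L has dimension at most 4, there exist a linear subspace W of ℝ³ × ℝ³ and a linear map f : ℝ³ × ℝ³ → S³ with S₊³ ∩ L = f((Q × Q) ∩ W). -/

import Mathlib

/-! Put `K = S₊³ ∩ L`. Everything reduces to finding linearly independent `u, v ∈ ℝ³` with
`uᵀ A v = 0` for all `A ∈ K`.

Such a pair gives the lift (`lift_of_pair`): if `P` has rows `u × v, u, v`, then `P A Pᵀ` is,
for every `A ∈ K`, a psd matrix whose `(1,2)` entry vanishes. By a Schur complement computation, such a matrix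
is psd exactly when it is the sum of a psd matrix supported on the indices `{0,1}` and one supported
on `{0,2}`. Both `2 × 2` psd cones are copies of `Q`, so the psd matrices with vanishing `(1,2)`
entry are the linear image of `Q × Q`; intersecting with the preimage of `L` gives `K`.

To find the pair, note that `K` spans at most `4` dimensions, so at least a two-dimensional space of
symmetric matrices is trace-orthogonal to `K`. Since `det` is an odd function in size `3`, it
vanishes at some nonzero `B` of that space (`exists_singular`). Diagonalise `B`, with
eigenvalues `a, b, 0` and eigenvectors `p, q, r`; then `a pᵀAp + b qᵀAq = 0` for `A ∈ K`.
If `a` and `b` have opposite signs, `√|a| p ± √|b| q` is the desired pair. Otherwise one of `p, q`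
lies in the kernel of every `A ∈ K`, and `p, q` is the desired pair. -/

open Matrix

noncomputable section

/-- The three-dimensional Lorentz cone `Q = {x ∈ ℝ³ : x₃ ≥ √(x₁² + x₂²)}`. -/
def lorentzCone : Set (Fin 3 → ℝ) :=
  {x | Real.sqrt (x 0 ^ 2 + x 1 ^ 2) ≤ x 2}

/-- The `m`-fold Cartesian power `Qᵐ ⊆ (ℝ³)ᵐ` of the Lorentz cone. -/
def lorentzPow (m : ℕ) : Set (Fin m → Fin 3 → ℝ) :=
  {x | ∀ i, x i ∈ lorentzCone}

/-- The cone of real symmetric positive semidefinite `k × k` matrices. -/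
def psdCone (k : ℕ) : Set (Matrix (Fin k) (Fin k) ℝ) :=
  {A | A.PosSemidef}

/-- For `B ∈ Sᵏ`, the slice `S_B = {A ∈ S₊ᵏ : tr(AB) = 0}` of the psd cone
orthogonal to `B` w.r.t. the trace scalar product. -/
def sliceOrth (k : ℕ) (B : Matrix (Fin k) (Fin k) ℝ) : Set (Matrix (Fin k) (Fin k) ℝ) :=
  {A | A.PosSemidef ∧ Matrix.trace (A * B) = 0}

/-- `S` is a slice of `S₊ᵏ`: the intersection of the psd cone with a linear
subspace of the space of symmetric matrices. -/
def IsSlice (k : ℕ) (S : Set (Matrix (Fin k) (Fin k) ℝ)) : Prop :=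
  ∃ L : Submodule ℝ (Matrix (Fin k) (Fin k) ℝ),
    (∀ A ∈ L, A.IsSymm) ∧ S = psdCone k ∩ (L : Set (Matrix (Fin k) (Fin k) ℝ))

/-- A set `S` in a real vector space is second-order cone representable (socr)
if it is the image under a linear map of the intersection of `Qᵐ` with a
linear subspace of `(ℝ³)ᵐ`, for some positive integer `m`. -/
def IsSOCR {V : Type*} [AddCommGroup V] [Module ℝ V] (S : Set V) : Prop :=
  ∃ m : ℕ, 0 < m ∧ ∃ W : Submodule ℝ (Fin m → Fin 3 → ℝ),
    ∃ f : (Fin m → Fin 3 → ℝ) →ₗ[ℝ] V,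
      S = f '' (lorentzPow m ∩ (W : Set (Fin m → Fin 3 → ℝ)))

/-- A symmetric matrix is indefinite if it is neither positive semidefinite
nor negative semidefinite. -/
def Indefinite (k : ℕ) (B : Matrix (Fin k) (Fin k) ℝ) : Prop :=
  ¬ B.PosSemidef ∧ ¬ (-B).PosSemidef

/-! ### A singular matrix orthogonal to the slice -/

/-- The symmetric matrix with upper triangular entries `x 0, …, x 5`. -/
def symMat : (Fin 6 → ℝ) →ₗ[ℝ] Matrix (Fin 3) (Fin 3) ℝ where
  toFun x := !![x 0, x 1, x 2; x 1, x 3, x 4; x 2, x 4, x 5]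
  map_add' x y := by ext i j; fin_cases i <;> fin_cases j <;> simp
  map_smul' c x := by ext i j; fin_cases i <;> fin_cases j <;> simp

lemma symMat_apply (x : Fin 6 → ℝ) :
    symMat x = !![x 0, x 1, x 2; x 1, x 3, x 4; x 2, x 4, x 5] := rfl

lemma symMat_isSymm (x : Fin 6 → ℝ) : (symMat x).IsSymm := by
  ext i j; fin_cases i <;> fin_cases j <;> simp [symMat_apply]

lemma symMat_injective : Function.Injective symMat := by
  intro x y h
  simp only [symMat_apply] at h
  have e := fun i j => congrFun (congrFun h i) j
  have h00 := e 0 0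
  have h01 := e 0 1
  have h02 := e 0 2
  have h11 := e 1 1
  have h12 := e 1 2
  have h22 := e 2 2
  simp at h00 h01 h02 h11 h12 h22
  ext i; fin_cases i <;> simp_all

/-- Along the half circle `cos θ x + sin θ y` from `x` to `-x` the determinant changes sign. -/
lemma exists_singular (V : Submodule ℝ (Fin 6 → ℝ)) (hV : 2 ≤ Module.finrank ℝ V) :
    ∃ z ∈ V, z ≠ 0 ∧ (symMat z).det = 0 := by
  obtain ⟨w, hw⟩ := exists_linearIndependent_of_le_finrank hV
  have hpair := LinearIndependent.pair_iff.1
    (show LinearIndependent ℝ ![w 0, w 1] by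
      convert hw using 1; ext i; fin_cases i <;> rfl)
  set g : ℝ → (Fin 6 → ℝ) := fun θ => Real.cos θ • (w 0 : Fin 6 → ℝ) + Real.sin θ • (w 1 : Fin 6 → ℝ)
    with hg
  have hcont : Continuous fun θ => (symMat (g θ)).det := by
    have h1 : Continuous fun θ => symMat (g θ) :=
      (LinearMap.continuous_of_finiteDimensional symMat).comp (by fun_prop)
    exact h1.matrix_det
  have hend : (symMat (g Real.pi)).det = -(symMat (g 0)).det := by
    have : g Real.pi = -g 0 := by simp [hg]
    rw [this, map_neg, Matrix.det_neg]
    norm_num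
  obtain ⟨θ, -, hθ⟩ : ∃ θ ∈ Set.uIcc 0 Real.pi, (symMat (g θ)).det = 0 := by
    have := intermediate_value_uIcc (a := 0) (b := Real.pi) hcont.continuousOn
    refine this ?_
    simp only [hend, Set.mem_uIcc]
    rcases le_total 0 (symMat (g 0)).det with h | h
    · right; constructor <;> linarith
    · left; constructor <;> linarith
  refine ⟨g θ, V.add_mem (V.smul_mem _ (w 0).2) (V.smul_mem _ (w 1).2), fun h0 => ?_, hθ⟩
  obtain ⟨hc, hs⟩ := hpair (Real.cos θ) (Real.sin θ) (by ext1; exact h0)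
  have := Real.sin_sq_add_cos_sq θ
  simp [hc, hs] at this

/-! ### Conjugate pairs from a singular matrix -/

lemma dotProduct_mulVec_symm {A : Matrix (Fin 3) (Fin 3) ℝ} (hA : A.IsSymm) (p q : Fin 3 → ℝ) :
    p ⬝ᵥ A *ᵥ q = q ⬝ᵥ A *ᵥ p := by
  rw [Matrix.dotProduct_mulVec, dotProduct_comm, ← Matrix.mulVec_transpose, hA.eq]

/-- Here `a, b` are the possibly nonzero eigenvalues of a singular symmetric `B` and `p, q` the
corresponding eigenvectors, so that the relation on `A` says `tr (A B) = 0`. -/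
lemma exists_pair_of_diag {a b : ℝ} (hab : a ≠ 0 ∨ b ≠ 0) {p q : Fin 3 → ℝ}
    (hpq : LinearIndependent ℝ ![p, q]) :
    ∃ u v : Fin 3 → ℝ, LinearIndependent ℝ ![u, v] ∧
      ∀ A : Matrix (Fin 3) (Fin 3) ℝ, A.PosSemidef →
        a * (p ⬝ᵥ A *ᵥ p) + b * (q ⬝ᵥ A *ᵥ q) = 0 → u ⬝ᵥ A *ᵥ v = 0 := by
  by_cases hs : a * b < 0
  · have ha : a ≠ 0 := by rintro rfl; simp at hs
    have hb : b ≠ 0 := by rintro rfl; simp at hs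
    have hα : √|a| ^ 2 = |a| := Real.sq_sqrt (abs_nonneg a)
    have hβ : √|b| ^ 2 = |b| := Real.sq_sqrt (abs_nonneg b)
    have hα0 : √|a| ≠ 0 := (Real.sqrt_pos.2 (abs_pos.2 ha)).ne'
    have hβ0 : √|b| ≠ 0 := (Real.sqrt_pos.2 (abs_pos.2 hb)).ne'
    set α := √|a|
    set β := √|b|
    refine ⟨α • p + β • q, α • p - β • q, ?_, fun A hA h => ?_⟩
    · rw [LinearIndependent.pair_iff] at hpq ⊢
      intro s t hst
      obtain ⟨h1, h2⟩ := hpq (s * α + t * α) (s * β - t * β) (by rw [← hst]; module)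
      have h3 : s + t = 0 := by
        apply mul_right_cancel₀ hα0; linarith
      have h4 : s - t = 0 := by
        apply mul_right_cancel₀ hβ0; linarith
      constructor <;> linarith
    · have hsymm := dotProduct_mulVec_symm (A := A) (by simpa using hA.isHermitian) p q
      simp only [Matrix.mulVec_sub, Matrix.mulVec_smul, add_dotProduct, dotProduct_sub,
        smul_dotProduct, dotProduct_smul, smul_eq_mul, hsymm]
      have : α ^ 2 * (p ⬝ᵥ A *ᵥ p) - β ^ 2 * (q ⬝ᵥ A *ᵥ q) = 0 := by
        rw [hα, hβ]
        rcases mul_neg_iff.1 hs with ⟨h1, h2⟩ | ⟨h1, h2⟩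
        · rw [abs_of_pos h1, abs_of_neg h2]; linarith
        · rw [abs_of_neg h1, abs_of_pos h2]; linarith
      linarith
  · refine ⟨p, q, hpq, fun A hA h => ?_⟩
    have hp : 0 ≤ p ⬝ᵥ A *ᵥ p := by simpa using hA.dotProduct_mulVec_nonneg p
    have hq : 0 ≤ q ⬝ᵥ A *ᵥ q := by simpa using hA.dotProduct_mulVec_nonneg q
    have hker : ∀ x : Fin 3 → ℝ, x ⬝ᵥ A *ᵥ x = 0 → A *ᵥ x = 0 := fun x hx =>
      (hA.dotProduct_mulVec_zero_iff x).1 (by simpa using hx)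
    push Not at hs
    -- Since `a * b ≥ 0`, both summands of `h` vanish, and a nonzero coefficient can be cancelled.
    have hz : p ⬝ᵥ A *ᵥ p = 0 ∨ q ⬝ᵥ A *ᵥ q = 0 := by
      rcases hab with ha | hb
      · left
        by_contra hne
        have hpos : 0 < p ⬝ᵥ A *ᵥ p := lt_of_le_of_ne hp (Ne.symm hne)
        have h1 : 0 < a ^ 2 * (p ⬝ᵥ A *ᵥ p) := by positivity
        have h2 := mul_nonneg hs hq
        have h3 : a ^ 2 * (p ⬝ᵥ A *ᵥ p) + a * b * (q ⬝ᵥ A *ᵥ q) = 0 := by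
          linear_combination a * h
        linarith
      · right
        by_contra hne
        have hpos : 0 < q ⬝ᵥ A *ᵥ q := lt_of_le_of_ne hq (Ne.symm hne)
        have h1 : 0 < b ^ 2 * (q ⬝ᵥ A *ᵥ q) := by positivity
        have h2 := mul_nonneg hs hp
        have h3 : b ^ 2 * (q ⬝ᵥ A *ᵥ q) + a * b * (p ⬝ᵥ A *ᵥ p) = 0 := by
          linear_combination b * h
        linarith
    rcases hz with hz | hz
    · rw [dotProduct_mulVec_symm (by simpa using hA.isHermitian), hker p hz, dotProduct_zero]
    · rw [hker q hz, dotProduct_zero]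

lemma exists_pair {B : Matrix (Fin 3) (Fin 3) ℝ} (hB : B.IsSymm) (hB0 : B ≠ 0)
    (hdet : B.det = 0) :
    ∃ u v : Fin 3 → ℝ, LinearIndependent ℝ ![u, v] ∧
      ∀ A : Matrix (Fin 3) (Fin 3) ℝ, A.PosSemidef → (A * B).trace = 0 → u ⬝ᵥ A *ᵥ v = 0 := by
  have hH : B.IsHermitian := by simpa [Matrix.IsHermitian] using hB.eq
  set l := hH.eigenvalues with hl
  let U : Matrix (Fin 3) (Fin 3) ℝ := hH.eigenvectorUnitary
  have hUU : Uᵀ * U = 1 := by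
    have := Unitary.coe_star_mul_self hH.eigenvectorUnitary
    simpa [Matrix.star_eq_conjTranspose] using this
  have hBU : B = U * diagonal l * Uᵀ := by
    have := hH.spectral_theorem
    rw [Unitary.conjStarAlgAut_apply] at this
    simpa [Matrix.star_eq_conjTranspose, Function.comp_def] using this
  have hli : LinearIndependent ℝ Uᵀ.row :=
    Matrix.linearIndependent_rows_of_isUnit (IsUnit.of_mul_eq_one U hUU)
  have htr : ∀ A : Matrix (Fin 3) (Fin 3) ℝ,
      (A * B).trace = ∑ i, l i * (Uᵀ i ⬝ᵥ A *ᵥ Uᵀ i) := by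
    intro A
    rw [hBU]
    simp only [Matrix.trace, Matrix.mul_apply, Matrix.diag, diagonal, Matrix.transpose_apply,
      dotProduct, Matrix.mulVec, Fin.sum_univ_three, Matrix.of_apply]
    simp
    ring
  obtain ⟨i, hi⟩ : ∃ i, l i = 0 := by
    have := hH.det_eq_prod_eigenvalues
    rw [hdet] at this
    obtain ⟨i, -, hi⟩ := Finset.prod_eq_zero_iff.1 this.symm
    exact ⟨i, by simpa using hi⟩
  have hne : ∃ j, l j ≠ 0 := by
    by_contra! h
    apply hB0
    rw [hBU, show l = 0 from funext h]
    simp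
  -- `j, k` are the two indices other than `i`
  obtain ⟨j, k, hjk, hsum⟩ : ∃ j k : Fin 3, j ≠ k ∧
      ∀ F : Fin 3 → ℝ, F i = 0 → ∑ m, F m = F j + F k ∧ (F j = 0 → F k = 0 → ∀ m, F m = 0) := by
    fin_cases i
    · refine ⟨1, 2, by decide, fun F hF => ⟨?_, fun h1 h2 m => ?_⟩⟩
      · simp_all [Fin.sum_univ_three]
      · fin_cases m <;> simp_all
    · refine ⟨0, 2, by decide, fun F hF => ⟨?_, fun h1 h2 m => ?_⟩⟩
      · simp_all [Fin.sum_univ_three]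
      · fin_cases m <;> simp_all
    · refine ⟨0, 1, by decide, fun F hF => ⟨?_, fun h1 h2 m => ?_⟩⟩
      · simp_all [Fin.sum_univ_three]
      · fin_cases m <;> simp_all
  have hab : l j ≠ 0 ∨ l k ≠ 0 := by
    by_contra! h
    obtain ⟨m, hm⟩ := hne
    exact hm ((hsum l hi).2 h.1 h.2 m)
  have hpq : LinearIndependent ℝ ![Uᵀ j, Uᵀ k] := by
    have := hli.comp ![j, k] (by
      intro x y; fin_cases x <;> fin_cases y <;> simp [hjk, hjk.symm])
    convert this using 1
    ext x; fin_cases x <;> rfl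
  obtain ⟨u, v, huv, h⟩ := exists_pair_of_diag hab hpq
  refine ⟨u, v, huv, fun A hA hAB => h A hA ?_⟩
  rw [← (hsum (fun m => l m * (Uᵀ m ⬝ᵥ A *ᵥ Uᵀ m)) (by simp [hi])).1, ← htr, hAB]

/-! ### The lift -/

/-- The sum of the `2 × 2` symmetric matrices with coordinates `p.1` and `p.2`, supported on the
indices `{0,1}` and `{0,2}` respectively. -/
def arrow : ((Fin 3 → ℝ) × (Fin 3 → ℝ)) →ₗ[ℝ] Matrix (Fin 3) (Fin 3) ℝ where
  toFun p := !![(p.1 2 - p.1 0) + (p.2 2 - p.2 0), p.1 1, p.2 1;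
                p.1 1, p.1 2 + p.1 0, 0;
                p.2 1, 0, p.2 2 + p.2 0]
  map_add' x y := by ext i j; fin_cases i <;> fin_cases j <;> simp <;> ring
  map_smul' c x := by ext i j; fin_cases i <;> fin_cases j <;> simp <;> ring

lemma arrow_apply (p : (Fin 3 → ℝ) × (Fin 3 → ℝ)) :
    arrow p = !![(p.1 2 - p.1 0) + (p.2 2 - p.2 0), p.1 1, p.2 1;
                 p.1 1, p.1 2 + p.1 0, 0;
                 p.2 1, 0, p.2 2 + p.2 0] := rfl

lemma mem_lorentzCone_iff (x : Fin 3 → ℝ) :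
    x ∈ lorentzCone ↔ 0 ≤ x 2 ∧ x 0 ^ 2 + x 1 ^ 2 ≤ x 2 ^ 2 := by
  simp [lorentzCone, Real.sqrt_le_iff]

/-- `Q` consists of the coordinates of psd binary quadratic forms. -/
lemma lorentz_form_nonneg {x : Fin 3 → ℝ} (hx : x ∈ lorentzCone) (s t : ℝ) :
    0 ≤ (x 2 - x 0) * s ^ 2 + 2 * x 1 * s * t + (x 2 + x 0) * t ^ 2 := by
  obtain ⟨h2, h⟩ := (mem_lorentzCone_iff x).1 hx
  have hle : |x 0| ≤ x 2 := abs_le_of_sq_le_sq (by nlinarith [sq_nonneg (x 1)]) h2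
  obtain ⟨ha, hb⟩ := abs_le.1 hle
  rcases (show 0 ≤ x 2 + x 0 by linarith).eq_or_lt with h0 | h0
  · have h1 : x 1 = 0 := by
      have : x 1 ^ 2 ≤ 0 := by nlinarith
      exact pow_eq_zero_iff two_ne_zero |>.1 (le_antisymm this (sq_nonneg _))
    rw [h1, ← h0]
    nlinarith [mul_nonneg (sub_nonneg.2 hb) (sq_nonneg s)]
  · refine nonneg_of_mul_nonneg_right ?_ h0
    have h1 : 0 ≤ (x 2 ^ 2 - x 0 ^ 2 - x 1 ^ 2) * s ^ 2 :=
      mul_nonneg (by linarith) (sq_nonneg s)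
    nlinarith [sq_nonneg ((x 2 + x 0) * t + x 1 * s)]

lemma arrow_posSemidef {p : (Fin 3 → ℝ) × (Fin 3 → ℝ)} (h1 : p.1 ∈ lorentzCone)
    (h2 : p.2 ∈ lorentzCone) : (arrow p).PosSemidef := by
  refine .of_dotProduct_mulVec_nonneg ?_ fun z => ?_
  · ext i j; fin_cases i <;> fin_cases j <;> simp [arrow_apply]
  · have e1 := lorentz_form_nonneg h1 (z 0) (z 1)
    have e2 := lorentz_form_nonneg h2 (z 0) (z 2)
    simp [arrow_apply, dotProduct, Matrix.mulVec, Fin.sum_univ_three]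
    linarith

/-- Schur complement decomposition: the corner entry is split as `c = p² / a + (c - p² / a)`, which
is correct also for `a = 0`, where `p = 0` and `p² / 0 = 0`. -/
lemma exists_arrow {A : Matrix (Fin 3) (Fin 3) ℝ} (hA : A.PosSemidef) (h12 : A 1 2 = 0) :
    ∃ p : (Fin 3 → ℝ) × (Fin 3 → ℝ), p.1 ∈ lorentzCone ∧ p.2 ∈ lorentzCone ∧ arrow p = A := by
  have hs : ∀ i j, A j i = A i j := fun i j => by simpa using hA.isHermitian.apply i j
  have hdet := hA.det_nonneg
  have hm1 := (hA.submatrix ![0, 1]).det_nonneg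
  have hm2 := (hA.submatrix ![0, 2]).det_nonneg
  have ha : 0 ≤ A 1 1 := hA.diag_nonneg
  have hb : 0 ≤ A 2 2 := hA.diag_nonneg
  have hc : 0 ≤ A 0 0 := hA.diag_nonneg
  rw [Matrix.det_fin_three] at hdet
  simp only [Matrix.det_fin_two, Matrix.submatrix_apply, Matrix.cons_val_zero,
    Matrix.cons_val_one] at hm1 hm2
  rw [hs 0 1, hs 0 2, hs 1 2, h12] at hdet
  rw [hs 0 1] at hm1
  rw [hs 0 2] at hm2
  have key : 0 ≤ A 0 0 - A 0 1 ^ 2 / A 1 1 ∧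
      A 0 2 ^ 2 ≤ A 2 2 * (A 0 0 - A 0 1 ^ 2 / A 1 1) ∧
      A 0 1 ^ 2 / A 1 1 * A 1 1 = A 0 1 ^ 2 := by
    rcases ha.eq_or_lt with h0 | h0
    · rw [← h0] at hm1 ⊢
      have : A 0 1 = 0 := by nlinarith
      simp only [this, div_zero, sub_zero]
      refine ⟨hc, by linarith, by simp⟩
    · have hd : A 0 1 ^ 2 / A 1 1 * A 1 1 = A 0 1 ^ 2 := div_mul_cancel₀ _ h0.ne'
      refine ⟨?_, ?_, hd⟩
      · rw [sub_nonneg, div_le_iff₀ h0]; linarith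
      · refine le_of_mul_le_mul_right ?_ h0
        have : A 2 2 * (A 0 0 - A 0 1 ^ 2 / A 1 1) * A 1 1
            = A 2 2 * A 0 0 * A 1 1 - A 2 2 * A 0 1 ^ 2 := by
          linear_combination (-A 2 2) * hd
        rw [this]; linarith
  have hq : 0 ≤ A 0 1 ^ 2 / A 1 1 := by positivity
  obtain ⟨k1, k2, k3⟩ := key
  set c := A 0 1 ^ 2 / A 1 1
  refine ⟨(![(A 1 1 - c) / 2, A 0 1, (A 1 1 + c) / 2],
    ![(A 2 2 - (A 0 0 - c)) / 2, A 0 2, (A 2 2 + (A 0 0 - c)) / 2]), ?_, ?_, ?_⟩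
  · rw [mem_lorentzCone_iff]
    simp only [Matrix.cons_val]
    constructor <;> nlinarith
  · rw [mem_lorentzCone_iff]
    simp only [Matrix.cons_val]
    constructor <;> nlinarith
  · have h21 : A 2 1 = 0 := by rw [hs 1 2, h12]
    ext i j
    fin_cases i <;> fin_cases j <;>
      simp [arrow_apply, hs 0 1, hs 0 2, h21, h12] <;> ring

lemma lift_of_pair (L : Submodule ℝ (Matrix (Fin 3) (Fin 3) ℝ)) {u v : Fin 3 → ℝ}
    (huv : LinearIndependent ℝ ![u, v])
    (h : ∀ A ∈ psdCone 3 ∩ (L : Set (Matrix (Fin 3) (Fin 3) ℝ)), u ⬝ᵥ A *ᵥ v = 0) :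
    ∃ W : Submodule ℝ ((Fin 3 → ℝ) × (Fin 3 → ℝ)),
      ∃ f : ((Fin 3 → ℝ) × (Fin 3 → ℝ)) →ₗ[ℝ] Matrix (Fin 3) (Fin 3) ℝ,
        psdCone 3 ∩ (L : Set (Matrix (Fin 3) (Fin 3) ℝ)) =
          f '' ({p | p.1 ∈ lorentzCone ∧ p.2 ∈ lorentzCone} ∩
            (W : Set ((Fin 3 → ℝ) × (Fin 3 → ℝ)))) := by
  let P : Matrix (Fin 3) (Fin 3) ℝ := Matrix.of ![crossProduct u v, u, v]
  have hP : IsUnit P.det := by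
    have h0 := crossProduct_ne_zero_iff_linearIndependent.2 huv
    have : P.det = crossProduct u v ⬝ᵥ crossProduct u v := (triple_product_eq_det _ _ _).symm
    rw [this, isUnit_iff_ne_zero]
    exact fun h1 => h0 (dotProduct_self_eq_zero.1 h1)
  let R := P⁻¹
  have hRP : R * P = 1 := Matrix.nonsing_inv_mul P hP
  have hPR : Pᵀ * Rᵀ = 1 := by rw [← Matrix.transpose_mul, hRP, Matrix.transpose_one]
  let f : ((Fin 3 → ℝ) × (Fin 3 → ℝ)) →ₗ[ℝ] Matrix (Fin 3) (Fin 3) ℝ :=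
    LinearMap.mulRight ℝ Rᵀ ∘ₗ LinearMap.mulLeft ℝ R ∘ₗ arrow
  have hf : ∀ p, f p = R * arrow p * Rᵀ := fun p => rfl
  refine ⟨L.comap f, f, ?_⟩
  ext A
  constructor
  · intro hA
    have hpsd : (P * A * Pᵀ).PosSemidef := by
      simpa using Matrix.PosSemidef.mul_mul_conjTranspose_same (show A.PosSemidef from hA.1) P
    have h12 : (P * A * Pᵀ) 1 2 = 0 := by
      rw [← h A hA]
      rw [Matrix.dotProduct_mulVec]
      simp [P, Matrix.mul_apply, dotProduct, Matrix.vecMul, Fin.sum_univ_three]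
    obtain ⟨p, hp1, hp2, hp⟩ := exists_arrow hpsd h12
    have hfp : f p = A := by
      rw [hf, hp]
      calc R * (P * A * Pᵀ) * Rᵀ = (R * P) * A * (Pᵀ * Rᵀ) := by simp only [Matrix.mul_assoc]
        _ = A := by rw [hRP, hPR, Matrix.one_mul, Matrix.mul_one]
    exact ⟨p, ⟨⟨hp1, hp2⟩, by simpa [hfp] using hA.2⟩, hfp⟩
  · rintro ⟨p, ⟨⟨hp1, hp2⟩, hpL⟩, rfl⟩
    refine ⟨?_, hpL⟩
    change (f p).PosSemidef
    rw [hf]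
    simpa using (arrow_posSemidef hp1 hp2).mul_mul_conjTranspose_same R

/-- Every slice of `S₊³` of dimension at most `4` admits a `Q²`-lift. -/
theorem slice_dim_le_four_Q2_lift (L : Submodule ℝ (Matrix (Fin 3) (Fin 3) ℝ))
    (hL : ∀ A ∈ L, A.IsSymm)
    (hdim : Module.finrank ℝ
      (Submodule.span ℝ (psdCone 3 ∩ (L : Set (Matrix (Fin 3) (Fin 3) ℝ)))) ≤ 4) :
    ∃ W : Submodule ℝ ((Fin 3 → ℝ) × (Fin 3 → ℝ)),
      ∃ f : ((Fin 3 → ℝ) × (Fin 3 → ℝ)) →ₗ[ℝ] Matrix (Fin 3) (Fin 3) ℝ,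
        psdCone 3 ∩ (L : Set (Matrix (Fin 3) (Fin 3) ℝ)) =
          f '' ({p | p.1 ∈ lorentzCone ∧ p.2 ∈ lorentzCone} ∩
            (W : Set ((Fin 3 → ℝ) × (Fin 3 → ℝ)))) := by
  set S := Submodule.span ℝ (psdCone 3 ∩ (L : Set (Matrix (Fin 3) (Fin 3) ℝ)))
  -- `T x` is the functional `A ↦ tr (A * symMat x)` on the span of the slice
  let T : (Fin 6 → ℝ) →ₗ[ℝ] Module.Dual ℝ S :=
    ((LinearMap.mul ℝ (Matrix (Fin 3) (Fin 3) ℝ)).flip.compr₂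
      (Matrix.traceLinearMap (Fin 3) ℝ ℝ)).compl₂ S.subtype ∘ₗ symMat
  have hT : ∀ x (A : S), T x A = ((A : Matrix (Fin 3) (Fin 3) ℝ) * symMat x).trace :=
    fun x A => rfl
  have hker : 2 ≤ Module.finrank ℝ (LinearMap.ker T) := by
    have h1 := T.finrank_range_add_finrank_ker
    have h2 := Submodule.finrank_le (LinearMap.range T)
    rw [Subspace.dual_finrank_eq] at h2
    rw [Module.finrank_fin_fun] at h1
    omega
  obtain ⟨z, hz, hz0, hdet⟩ := exists_singular _ hker
  obtain ⟨u, v, huv, h⟩ := exists_pair (symMat_isSymm z)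
    (fun h0 => hz0 (symMat_injective (h0.trans (map_zero symMat).symm))) hdet
  refine lift_of_pair L huv fun A hA => h A hA.1 ?_
  rw [← hT z ⟨A, Submodule.subset_span hA⟩, LinearMap.mem_ker.1 hz, LinearMap.zero_apply]
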